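/- For every rational number α with 0 < α ≤ 1, there exists a finite semigroup S with χ(S) = α. -/

import Mathlib

/-- A relation `ρ` is a *diagonal subsemigroup* with respect to multiplication `mul`:
it is reflexive and compatible with `mul`. -/
def IsDiagonal {S : Type*} (mul : S → S → S) (ρ : S → S → Prop) : Prop :=
  (∀ s, ρ s s) ∧ ∀ a b c d, ρ a b → ρ c d → ρ (mul a c) (mul b d)

/-- A relation `ρ` is a *congruence* with respect to `mul`. -/
def IsCongruence {S : Type*} (mul : S → S → S) (ρ : S → S → Prop) : Prop :=
  Equivalence ρ ∧ ∀ a b c d, ρ a b → ρ c d → ρ (mul a c) (mul b d)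

/-- The DSC coefficient: the number of congruences divided by the number of
diagonal subsemigroups. -/
noncomputable def chi {S : Type*} (mul : S → S → S) : ℚ :=
  (Nat.card {ρ : S → S → Prop // IsCongruence mul ρ} : ℚ) /
  (Nat.card {ρ : S → S → Prop // IsDiagonal mul ρ} : ℚ)

/-- The DSC coefficient of a semigroup. -/
noncomputable def chiSemigroup (S : Type*) [Semigroup S] : ℚ :=
  chi (fun a b : S => a * b)

namespace DSC

/-- The sandwich matrix. -/
def P {k : ℕ} {H : Type} [AddCommGroup H] (γ : H) (l i : Fin (k+1)) : H :=
  if l = i ∧ i ≠ 0 then γ else 0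

/-- The multiplication of the Rees matrix semigroup. -/
def mulR {k : ℕ} {H : Type} [AddCommGroup H] (γ : H)
    (x y : Fin (k+1) × H × Fin (k+1)) : Fin (k+1) × H × Fin (k+1) :=
  (x.1, x.2.1 + P γ x.2.2 y.1 + y.2.1, y.2.2)

/-- The Rees matrix semigroup. -/
def sg (k : ℕ) {H : Type} [AddCommGroup H] (γ : H) :
    Semigroup (Fin (k+1) × H × Fin (k+1)) where
  mul := mulR γ
  mul_assoc := by
    intro a b c
    change mulR γ (mulR γ a b) c = mulR γ a (mulR γ b c)
    simp only [mulR, Prod.mk.injEq, true_and, and_true]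
    abel

/-- The relation given by a triple. -/
def rel {k : ℕ} {H : Type} [AddCommGroup H]
    (N : AddSubgroup H) (R Q : Fin (k+1) → Fin (k+1) → Prop)
    (x y : Fin (k+1) × H × Fin (k+1)) : Prop :=
  R x.1 y.1 ∧ y.2.1 - x.2.1 ∈ N ∧ Q x.2.2 y.2.2

/-- Admissible triples. -/
def Adm {k : ℕ} {H : Type} [AddCommGroup H] (γ : H)
    (N : AddSubgroup H) (R Q : Fin (k+1) → Fin (k+1) → Prop) : Prop :=
  γ ∈ N ∨ (R = Eq ∧ Q = Eq)

lemma P_mem {k : ℕ} {H : Type} [AddCommGroup H] {γ : H} {N : AddSubgroup H} (h : γ ∈ N)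
    (l i : Fin (k+1)) : P γ l i ∈ N := by
  unfold P; split_ifs
  · exact h
  · exact N.zero_mem

lemma P_zero_left {k : ℕ} {H : Type} [AddCommGroup H] (γ : H) (i : Fin (k+1)) :
    P γ 0 i = 0 := by
  unfold P; rw [if_neg]; rintro ⟨h, h'⟩; exact h' h.symm

lemma P_zero_right {k : ℕ} {H : Type} [AddCommGroup H] (γ : H) (i : Fin (k+1)) :
    P γ i 0 = 0 := by
  unfold P; simp

lemma rel_diag {k : ℕ} {H : Type} [AddCommGroup H] (γ : H)
    (N : AddSubgroup H) (R Q : Fin (k+1) → Fin (k+1) → Prop)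
    (hR : ∀ i, R i i) (hQ : ∀ i, Q i i) (h : Adm γ N R Q) :
    IsDiagonal (mulR γ) (rel N R Q) := by
  refine ⟨fun s => ⟨hR _, by simp, hQ _⟩, ?_⟩
  rintro a b c d ⟨h1, h2, h3⟩ ⟨h4, h5, h6⟩
  refine ⟨h1, ?_, h6⟩
  have key : P γ b.2.2 d.1 - P γ a.2.2 c.1 ∈ N := by
    rcases h with h | ⟨rfl, rfl⟩
    · exact N.sub_mem (P_mem h _ _) (P_mem h _ _)
    · rw [h3, h4]; simp
  have := N.add_mem (N.add_mem h2 key) h5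
  convert this using 1
  simp only [mulR]; abel

lemma rel_inj {k : ℕ} {H : Type} [AddCommGroup H]
    {N N' : AddSubgroup H} {R Q R' Q' : Fin (k+1) → Fin (k+1) → Prop}
    (hR : ∀ i, R i i) (hQ : ∀ i, Q i i) (hR' : ∀ i, R' i i) (hQ' : ∀ i, Q' i i)
    (h : rel N R Q = rel N' R' Q') : N = N' ∧ R = R' ∧ Q = Q' := by
  have h' : ∀ x y, rel N R Q x y ↔ rel N' R' Q' x y := fun x y => by rw [h]
  refine ⟨?_, ?_, ?_⟩
  · ext n
    simpa [rel, hR, hQ, hR', hQ'] using h' (0, 0, 0) (0, n, 0)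
  · ext i j
    simpa [rel, hR, hQ, hR', hQ'] using h' (i, 0, 0) (j, 0, 0)
  · ext i j
    simpa [rel, hR, hQ, hR', hQ'] using h' (0, 0, i) (0, 0, j)

lemma diag_rel {k : ℕ} {H : Type} [AddCommGroup H] [Finite H] (γ : H)
    (ρ : Fin (k+1) × H × Fin (k+1) → Fin (k+1) × H × Fin (k+1) → Prop)
    (hρ : IsDiagonal (mulR γ) ρ) :
    ∃ N : AddSubgroup H, Adm γ N (fun i j => ρ (i,0,0) (j,0,0)) (fun i j => ρ (0,0,i) (0,0,j)) ∧
      rel N (fun i j => ρ (i,0,0) (j,0,0)) (fun i j => ρ (0,0,i) (0,0,j)) = ρ := by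
  obtain ⟨hr, hm⟩ := hρ
  let M : AddSubmonoid H :=
    { carrier := {n | ρ (0,0,0) (0,n,0)}
      zero_mem' := hr _
      add_mem' := by
        intro a b ha hb
        have := hm _ _ _ _ ha hb
        simpa [mulR, P_zero_left] using this }
  have hM : ∀ n, n ∈ M ↔ ρ (0,0,0) (0,n,0) := fun n => Iff.rfl
  have hneg : ∀ n, n ∈ M → -n ∈ M := by
    intro n hn
    have h1 : (addOrderOf n - 1) • n = -n := by
      have hp := addOrderOf_pos n
      rw [eq_neg_iff_add_eq_zero, ← succ_nsmul, Nat.sub_add_cancel hp, addOrderOf_nsmul_eq_zero]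
    rw [← h1]; exact M.nsmul_mem hn _
  let N : AddSubgroup H := { M with neg_mem' := fun {n} hn => hneg n hn }
  have hN : ∀ n, n ∈ N ↔ ρ (0,0,0) (0,n,0) := fun n => Iff.rfl
  have hN2 : ∀ g h, h - g ∈ N ↔ ρ (0,g,0) (0,h,0) := by
    intro g h
    rw [hN]
    constructor
    · intro h1
      have := hm _ _ _ _ h1 (hr (0,g,0))
      simpa [mulR, P_zero_left] using this
    · intro h1
      have := hm _ _ _ _ h1 (hr (0,-g,0))
      simpa [mulR, P_zero_left, sub_eq_add_neg] using this
  have hsand : ∀ i g l j h m, ρ (i,g,l) (j,h,m) → h - g ∈ N := by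
    intro i g l j h m h1
    rw [hN2]
    have := hm _ _ _ _ (hm _ _ _ _ (hr (0,0,0)) h1) (hr (0,0,0))
    simpa [mulR, P_zero_left, P_zero_right] using this
  refine ⟨N, ?_, ?_⟩
  · by_cases hγ : γ ∈ N
    · exact Or.inl hγ
    · right
      constructor
      · ext i j
        constructor
        · intro h
          by_contra hij
          apply hγ
          have a1 := hsand _ _ _ _ _ _ (hm _ _ _ _ (hr (0,0,i)) h)
          have a2 := hsand _ _ _ _ _ _ (hm _ _ _ _ (hr (0,0,j)) h)
          have hji : ¬ j = i := fun h => hij h.symm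
          simp only [P, hij, hji, false_and, if_false, true_and] at a1 a2
          by_cases hi : i = 0
          · have hj : j ≠ 0 := fun h => hij (hi.trans h.symm)
            simpa [hj] using a2
          · simpa [hi] using a1
        · rintro rfl; exact hr _
      · ext i j
        constructor
        · intro h
          by_contra hij
          apply hγ
          have a1 := hsand _ _ _ _ _ _ (hm _ _ _ _ h (hr (i,0,0)))
          have a2 := hsand _ _ _ _ _ _ (hm _ _ _ _ h (hr (j,0,0)))
          have hji : ¬ j = i := fun h => hij h.symm
          simp only [P, hij, hji, false_and, if_false, true_and] at a1 a2
          by_cases hi : i = 0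
          · have hj : j ≠ 0 := fun h => hij (hi.trans h.symm)
            simpa [hj] using a2
          · simpa [hi] using a1
        · rintro rfl; exact hr _
  · ext ⟨i, g, l⟩ ⟨j, h, m⟩
    constructor
    · rintro ⟨h1, h2, h3⟩
      have h2' := (hN2 g h).1 h2
      have := hm _ _ _ _ (hm _ _ _ _ h1 h2') h3
      simpa [mulR, P_zero_left, P_zero_right] using this
    · intro h1
      have h2 := hsand _ _ _ _ _ _ h1
      have h3 : ρ (0,-g,0) (0,-h,0) := by
        rw [← hN2]
        have := N.neg_mem h2
        convert this using 1; abel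
      refine ⟨?_, h2, ?_⟩
      · have := hm _ _ _ _ (hm _ _ _ _ h1 (hr (0,0,0))) h3
        simpa [mulR, P_zero_left, P_zero_right] using this
      · have := hm _ _ _ _ h3 (hm _ _ _ _ (hr (0,0,0)) h1)
        simpa [mulR, P_zero_left, P_zero_right] using this

/-- Counting triples. -/
lemma count {k : ℕ} {H : Type} [AddCommGroup H] [Finite H] (γ : H)
    (C : (Fin (k+1) → Fin (k+1) → Prop) → Prop) (hC : C Eq) (hCr : ∀ R, C R → ∀ i, R i i)
    (D : (Fin (k+1) × H × Fin (k+1) → Fin (k+1) × H × Fin (k+1) → Prop) → Prop)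
    (h1 : ∀ N R Q, C R → C Q → Adm γ N R Q → D (rel N R Q))
    (h2 : ∀ ρ, D ρ → IsDiagonal (mulR γ) ρ ∧
      C (fun i j => ρ (i,0,0) (j,0,0)) ∧ C (fun i j => ρ (0,0,i) (0,0,j))) :
    Nat.card {ρ // D ρ} = Nat.card {N : AddSubgroup H // γ ∉ N} +
      Nat.card {N : AddSubgroup H // γ ∈ N} * (Nat.card {R // C R} * Nat.card {R // C R}) := by
  rw [← Nat.card_prod, ← Nat.card_prod, ← Nat.card_sum]
  symm
  let f : {N : AddSubgroup H // γ ∉ N} ⊕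
      ({N : AddSubgroup H // γ ∈ N} × {R // C R} × {R // C R}) → {ρ // D ρ} := fun x =>
    match x with
    | Sum.inl N => ⟨rel N.1 Eq Eq, h1 _ _ _ hC hC (Or.inr ⟨rfl, rfl⟩)⟩
    | Sum.inr (N, R, Q) => ⟨rel N.1 R.1 Q.1, h1 _ _ _ R.2 Q.2 (Or.inl N.2)⟩
  refine Nat.card_congr (Equiv.ofBijective f ⟨?_, ?_⟩)
  · have hE := hCr _ hC
    rintro (⟨N, hN⟩ | ⟨⟨N, hN⟩, ⟨R, hR⟩, ⟨Q, hQ⟩⟩) (⟨N', hN'⟩ | ⟨⟨N', hN'⟩, ⟨R', hR'⟩, ⟨Q', hQ'⟩⟩) h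
    · obtain ⟨rfl, -, -⟩ := rel_inj hE hE hE hE (congrArg Subtype.val h)
      rfl
    · obtain ⟨rfl, -, -⟩ := rel_inj hE hE (hCr _ hR') (hCr _ hQ') (congrArg Subtype.val h)
      exact absurd hN' hN
    · obtain ⟨rfl, -, -⟩ := rel_inj (hCr _ hR) (hCr _ hQ) hE hE (congrArg Subtype.val h)
      exact absurd hN hN'
    · obtain ⟨rfl, rfl, rfl⟩ := rel_inj (hCr _ hR) (hCr _ hQ) (hCr _ hR') (hCr _ hQ')
        (congrArg Subtype.val h)
      rfl
  · rintro ⟨ρ, hρ⟩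
    obtain ⟨hd, hR, hQ⟩ := h2 ρ hρ
    obtain ⟨N, hA, hrel⟩ := diag_rel γ ρ hd
    by_cases hN : γ ∈ N
    · exact ⟨Sum.inr (⟨N, hN⟩, ⟨_, hR⟩, ⟨_, hQ⟩), Subtype.ext hrel⟩
    · rcases hA with hA | ⟨e1, e2⟩
      · exact absurd hA hN
      · refine ⟨Sum.inl ⟨N, hN⟩, Subtype.ext ?_⟩
        rw [e1, e2] at hrel
        exact hrel

lemma count_diag {k : ℕ} {H : Type} [AddCommGroup H] [Finite H] (γ : H) :
    Nat.card {ρ : Fin (k+1) × H × Fin (k+1) → Fin (k+1) × H × Fin (k+1) → Prop //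
        IsDiagonal (mulR γ) ρ} = Nat.card {N : AddSubgroup H // γ ∉ N} +
      Nat.card {N : AddSubgroup H // γ ∈ N} *
        (Nat.card {R : Fin (k+1) → Fin (k+1) → Prop // ∀ i, R i i} *
          Nat.card {R : Fin (k+1) → Fin (k+1) → Prop // ∀ i, R i i}) :=
  count γ (fun R => ∀ i, R i i) (fun _ => rfl) (fun _ h => h) _
    (fun N R Q hR hQ hA => rel_diag γ N R Q hR hQ hA)
    (fun ρ h => ⟨h, fun _ => h.1 _, fun _ => h.1 _⟩)

lemma count_cong {k : ℕ} {H : Type} [AddCommGroup H] [Finite H] (γ : H) :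
    Nat.card {ρ : Fin (k+1) × H × Fin (k+1) → Fin (k+1) × H × Fin (k+1) → Prop //
        IsCongruence (mulR γ) ρ} = Nat.card {N : AddSubgroup H // γ ∉ N} +
      Nat.card {N : AddSubgroup H // γ ∈ N} *
        (Nat.card {R : Fin (k+1) → Fin (k+1) → Prop // Equivalence R} *
          Nat.card {R : Fin (k+1) → Fin (k+1) → Prop // Equivalence R}) := by
  refine count γ (fun R => Equivalence R) eq_equivalence (fun _ h => h.refl) _ ?_ ?_
  · intro N R Q hR hQ hA
    obtain ⟨hr, hm⟩ := rel_diag γ N R Q hR.refl hQ.refl hA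
    refine ⟨⟨hr, ?_, ?_⟩, hm⟩
    · rintro x y ⟨a, b, c⟩
      refine ⟨hR.symm a, ?_, hQ.symm c⟩
      have := N.neg_mem b
      rwa [neg_sub] at this
    · rintro x y z ⟨a, b, c⟩ ⟨a', b', c'⟩
      refine ⟨hR.trans a a', ?_, hQ.trans c c'⟩
      have := N.add_mem b' b
      rwa [sub_add_sub_cancel] at this
  · rintro ρ ⟨he, hm⟩
    exact ⟨⟨he.refl, hm⟩, ⟨fun _ => he.refl _, fun h => he.symm h, fun h h' => he.trans h h'⟩,
      ⟨fun _ => he.refl _, fun h => he.symm h, fun h h' => he.trans h h'⟩⟩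

lemma le_B (k : ℕ) :
    k + 1 ≤ Nat.card {R : Fin (k+1) → Fin (k+1) → Prop // Equivalence R} := by
  let f : Fin (k+1) → {R : Fin (k+1) → Fin (k+1) → Prop // Equivalence R} := fun i =>
    ⟨fun x y => x = y ∨ (x ≤ i ∧ y ≤ i), ⟨fun _ => Or.inl rfl, by grind, by grind⟩⟩
  have hf : Function.Injective f := by
    have key : ∀ i j, f i = f j → j ≤ i := by
      intro i j h
      have h1 := congrFun (congrFun (congrArg Subtype.val h) 0) j
      have h2 : (0 : Fin (k+1)) = j ∨ ((0 : Fin (k+1)) ≤ i ∧ j ≤ i) := by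
        refine h1.mpr (Or.inr ⟨Fin.zero_le _, le_rfl⟩)
      rcases h2 with h2 | h2
      · rw [← h2]; exact Fin.zero_le _
      · exact h2.2
    intro i j h
    exact le_antisymm (key _ _ h.symm) (key _ _ h)
  simpa using Nat.card_le_card_of_injective f hf

lemma B_sq_le_E (k : ℕ) :
    Nat.card {R : Fin (k+1) → Fin (k+1) → Prop // Equivalence R} *
      Nat.card {R : Fin (k+1) → Fin (k+1) → Prop // Equivalence R} ≤
    Nat.card {R : Fin (k+1) → Fin (k+1) → Prop // ∀ i, R i i} := by
  rw [← Nat.card_prod]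
  let f : {R : Fin (k+1) → Fin (k+1) → Prop // Equivalence R} ×
      {R : Fin (k+1) → Fin (k+1) → Prop // Equivalence R} →
      {R : Fin (k+1) → Fin (k+1) → Prop // ∀ i, R i i} := fun x =>
    ⟨fun i j => i = j ∨ (i < j ∧ x.1.1 i j) ∨ (j < i ∧ x.2.1 i j), fun _ => Or.inl rfl⟩
  refine Nat.card_le_card_of_injective f ?_
  rintro ⟨⟨R, hR⟩, ⟨Q, hQ⟩⟩ ⟨⟨R', hR'⟩, ⟨Q', hQ'⟩⟩ h
  have h1 : ∀ i j, (i = j ∨ (i < j ∧ R i j) ∨ (j < i ∧ Q i j)) ↔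
      (i = j ∨ (i < j ∧ R' i j) ∨ (j < i ∧ Q' i j)) := fun i j =>
    iff_of_eq (congrFun (congrFun (congrArg Subtype.val h) i) j)
  have h2 : R = R' := by
    ext i j
    rcases lt_trichotomy i j with hij | rfl | hij
    · simpa [hij, hij.ne, hij.not_gt] using h1 i j
    · exact ⟨fun _ => hR'.refl _, fun _ => hR.refl _⟩
    · have : R j i ↔ R' j i := by simpa [hij, hij.ne, hij.not_gt] using h1 j i
      exact ⟨fun h => hR'.symm (this.1 (hR.symm h)), fun h => hR.symm (this.2 (hR'.symm h))⟩
  have h3 : Q = Q' := by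
    ext i j
    rcases lt_trichotomy j i with hij | rfl | hij
    · simpa [hij, hij.ne', hij.not_gt] using h1 i j
    · exact ⟨fun _ => hQ'.refl _, fun _ => hQ.refl _⟩
    · have : Q j i ↔ Q' j i := by simpa [hij, hij.ne', hij.not_gt] using h1 j i
      exact ⟨fun h => hQ'.symm (this.1 (hQ.symm h)), fun h => hQ.symm (this.2 (hQ'.symm h))⟩
  subst h2 h3
  rfl

/-- Subgroups of a cyclic 2-group. -/
lemma pow_mem_iff {u i j : ℕ} (hi : i ≤ u) :
    ((2 ^ j : ℕ) : ZMod (2 ^ u)) ∈ AddSubgroup.zmultiples ((2 ^ i : ℕ) : ZMod (2 ^ u)) ↔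
      i ≤ j ∨ u ≤ j := by
  rw [AddSubgroup.mem_zmultiples_iff]
  constructor
  · rintro ⟨z, hz⟩
    by_contra! hc
    have h1 : ((z * 2 ^ i - 2 ^ j : ℤ) : ZMod (2 ^ u)) = 0 := by
      push_cast at hz ⊢
      rw [← hz]; simp
    rw [ZMod.intCast_zmod_eq_zero_iff_dvd] at h1
    have h2 : (2 ^ i : ℤ) ∣ z * 2 ^ i - 2 ^ j :=
      (pow_dvd_pow (2:ℤ) hi).trans (by exact_mod_cast h1)
    have h3 : (2 ^ i : ℤ) ∣ 2 ^ j := (Int.dvd_iff_dvd_of_dvd_sub h2).1 (Dvd.intro_left _ rfl)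
    have h4 : (2 ^ i : ℕ) ∣ 2 ^ j := by exact_mod_cast h3
    have := (Nat.pow_dvd_pow_iff_le_right (by norm_num)).1 h4
    omega
  · rintro (h | h)
    · refine ⟨(2 ^ (j - i) : ℕ), ?_⟩
      rw [natCast_zsmul, nsmul_eq_mul, ← Nat.cast_mul, ← pow_add, Nat.sub_add_cancel h]
    · refine ⟨0, ?_⟩
      rw [zero_zsmul, eq_comm, ZMod.natCast_eq_zero_iff]
      exact pow_dvd_pow _ h

lemma subgroup_form {u : ℕ} (N : AddSubgroup (ZMod (2 ^ u))) :
    ∃ i ≤ u, N = AddSubgroup.zmultiples ((2 ^ i : ℕ) : ZMod (2 ^ u)) := by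
  let f := Int.castAddHom (ZMod (2 ^ u))
  have hf : Function.Surjective f := ZMod.intCast_surjective
  obtain ⟨a, ha⟩ := Int.subgroup_cyclic (N.comap f)
  rw [← AddSubgroup.zmultiples_eq_closure] at ha
  have h1 : ((2 ^ u : ℕ) : ℤ) ∈ N.comap f := by
    rw [AddSubgroup.mem_comap]
    have : f ((2 ^ u : ℕ) : ℤ) = 0 := by
      change (((2 ^ u : ℕ) : ℤ) : ZMod (2 ^ u)) = 0
      rw [Int.cast_natCast, ZMod.natCast_self]
    rw [this]; exact N.zero_mem
  rw [ha, Int.mem_zmultiples_iff] at h1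
  have h2 : a.natAbs ∣ 2 ^ u := by
    have := Int.natAbs_dvd_natAbs.2 h1
    simpa using this
  obtain ⟨i, hi, h3⟩ := (Nat.dvd_prime_pow Nat.prime_two).1 h2
  refine ⟨i, hi, ?_⟩
  have h4 : N = (N.comap f).map f := (AddSubgroup.map_comap_eq_self_of_surjective hf N).symm
  have h5 : AddSubgroup.zmultiples a = AddSubgroup.zmultiples ((2 ^ i : ℕ) : ℤ) := by
    rw [← h3, Int.zmultiples_natAbs]
  rw [h4, ha, h5, AddMonoidHom.map_zmultiples]
  congr 1
  change (((2 ^ i : ℕ) : ℤ) : ZMod (2 ^ u)) = _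
  rw [Int.cast_natCast]

lemma zm_inj {u i j : ℕ} (hi : i ≤ u) (hj : j ≤ u)
    (h : AddSubgroup.zmultiples ((2 ^ i : ℕ) : ZMod (2 ^ u)) =
      AddSubgroup.zmultiples ((2 ^ j : ℕ) : ZMod (2 ^ u))) : i = j := by
  have h1 : i ≤ j ∨ u ≤ j :=
    (pow_mem_iff hi).1 (h ▸ AddSubgroup.mem_zmultiples ((2 ^ j : ℕ) : ZMod (2 ^ u)))
  have h2 : j ≤ i ∨ u ≤ i :=
    (pow_mem_iff hj).1 (h ▸ AddSubgroup.mem_zmultiples ((2 ^ i : ℕ) : ZMod (2 ^ u)))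
  omega

lemma exists_group (s t : ℕ) : ∃ (H : Type) (_ : AddCommGroup H) (_ : Finite H) (γ : H),
    Nat.card {N : AddSubgroup H // γ ∈ N} = s + 1 ∧
    Nat.card {N : AddSubgroup H // γ ∉ N} = t := by
  have hfin : NeZero (2 ^ (s + t)) := ⟨by positivity⟩
  refine ⟨ZMod (2 ^ (s + t)), inferInstance, inferInstance, ((2 ^ s : ℕ) : ZMod (2 ^ (s + t))),
    ?_, ?_⟩
  · let f : Fin (s + 1) → {N : AddSubgroup (ZMod (2 ^ (s + t))) //
        ((2 ^ s : ℕ) : ZMod (2 ^ (s + t))) ∈ N} := fun i =>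
      ⟨AddSubgroup.zmultiples ((2 ^ (i : ℕ) : ℕ) : ZMod (2 ^ (s + t))),
        (pow_mem_iff (by omega)).2 (Or.inl (by omega))⟩
    rw [← Nat.card_congr (Equiv.ofBijective f ⟨?_, ?_⟩), Nat.card_fin]
    · intro i j h
      exact Fin.ext (zm_inj (u := s + t) (i := (i : ℕ)) (j := (j : ℕ)) (by omega) (by omega)
        (congrArg Subtype.val h))
    · rintro ⟨N, hN⟩
      obtain ⟨i, hi, rfl⟩ := subgroup_form N
      rw [pow_mem_iff hi] at hN
      have hi' : i ≤ s := by omega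
      exact ⟨⟨i, by omega⟩, rfl⟩
  · let f : Fin t → {N : AddSubgroup (ZMod (2 ^ (s + t))) //
        ((2 ^ s : ℕ) : ZMod (2 ^ (s + t))) ∉ N} := fun i =>
      ⟨AddSubgroup.zmultiples ((2 ^ (s + 1 + (i : ℕ)) : ℕ) : ZMod (2 ^ (s + t))), by
        intro hm
        have h1 := i.isLt
        have h2 := (pow_mem_iff (u := s + t) (i := s + 1 + (i : ℕ)) (j := s) (by omega)).1 hm
        omega⟩
    rw [← Nat.card_congr (Equiv.ofBijective f ⟨?_, ?_⟩), Nat.card_fin]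
    · intro i j h
      have := zm_inj (i := s + 1 + (i : ℕ)) (j := s + 1 + (j : ℕ)) (by omega) (by omega)
        (congrArg Subtype.val h)
      exact Fin.ext (by omega)
    · rintro ⟨N, hN⟩
      obtain ⟨i, hi, rfl⟩ := subgroup_form N
      rw [pow_mem_iff hi] at hN
      refine ⟨⟨i - (s + 1), by omega⟩, Subtype.ext ?_⟩
      change AddSubgroup.zmultiples ((2 ^ (s + 1 + (i - (s + 1))) : ℕ) : ZMod (2 ^ (s + t))) = _
      rw [show s + 1 + (i - (s + 1)) = i by omega]

lemma main_frac (a b : ℕ) (ha : 0 < a) (hab : a < b) :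
    ∃ (S : Type) (inst : Semigroup S), Finite S ∧ @chiSemigroup S inst = (a : ℚ) / b := by
  have hB := le_B b
  have hE := B_sq_le_E b
  have hC := fun (H : Type) [AddCommGroup H] [Finite H] (γ : H) => count_cong (k := b) γ
  have hD := fun (H : Type) [AddCommGroup H] [Finite H] (γ : H) => count_diag (k := b) γ
  generalize Nat.card {R : Fin (b+1) → Fin (b+1) → Prop // Equivalence R} = B at hB hE hC
  generalize Nat.card {R : Fin (b+1) → Fin (b+1) → Prop // ∀ i, R i i} = E at hE hD
  have hle : b * (B * B) ≤ a * (E * E) := by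
    have h1 : b * B ≤ E := (Nat.mul_le_mul_right B (by omega)).trans hE
    have h2 : B ≤ E := (Nat.le_mul_of_pos_left B (by omega)).trans h1
    calc b * (B * B) = (b * B) * B := by ring
      _ ≤ E * E := Nat.mul_le_mul h1 h2
      _ ≤ a * (E * E) := Nat.le_mul_of_pos_left _ ha
  obtain ⟨t, ht⟩ := Nat.exists_eq_add_of_le hle
  obtain ⟨s, hs⟩ := Nat.exists_eq_add_of_lt hab
  obtain ⟨H, i1, i2, γ, h1, h2⟩ := exists_group s t
  refine ⟨_, sg b γ, inferInstance, ?_⟩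
  have e1 := hC H γ
  have e2 := hD H γ
  rw [h1, h2] at e1 e2
  change (Nat.card {ρ // IsCongruence (mulR γ) ρ} : ℚ) / (Nat.card {ρ // IsDiagonal (mulR γ) ρ} : ℚ) = _
  rw [e1, e2]
  have hEpos : 0 < E := lt_of_lt_of_le (Nat.mul_pos (by omega) (by omega)) hE
  have hpos : 0 < t + (s + 1) * (E * E) := by positivity
  rw [div_eq_div_iff (by exact_mod_cast hpos.ne') (by exact_mod_cast (by omega))]
  norm_cast
  have hb : b = a + (s + 1) := by omega
  have : t * b + (s+1) * (b * (B * B)) = t * a + (s+1) * (a * (E * E)) := by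
    rw [ht]
    generalize b * (B * B) = X
    rw [hb]; ring
  linarith

lemma main_one : ∃ (S : Type) (inst : Semigroup S), Finite S ∧ @chiSemigroup S inst = 1 := by
  refine ⟨PUnit, inferInstance, inferInstance, ?_⟩
  have h : ∀ ρ : PUnit → PUnit → Prop, IsCongruence (fun a b : PUnit => a * b) ρ ↔
      IsDiagonal (fun a b : PUnit => a * b) ρ := by
    intro ρ
    constructor
    · rintro ⟨h, h'⟩; exact ⟨h.refl, h'⟩
    · rintro ⟨h, h'⟩; exact ⟨⟨h, fun _ => h _, fun _ _ => h _⟩, h'⟩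
  unfold chiSemigroup chi
  rw [Nat.card_congr (Equiv.subtypeEquivRight h)]
  apply div_self
  have : Nonempty {ρ : PUnit → PUnit → Prop // IsDiagonal (fun a b : PUnit => a * b) ρ} :=
    ⟨⟨fun _ _ => True, fun _ => trivial, fun _ _ _ _ _ _ => trivial⟩⟩
  exact_mod_cast Nat.card_pos.ne'

end DSC

/-- For every rational `α` with `0 < α ≤ 1` there is a finite semigroup `S`
with `χ(S) = α`. -/
theorem stmt1 (α : ℚ) (h0 : 0 < α) (h1 : α ≤ 1) :
    ∃ (S : Type) (inst : Semigroup S), Finite S ∧ @chiSemigroup S inst = α := by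
  rcases eq_or_lt_of_le h1 with rfl | h1
  · exact DSC.main_one
  · have hn : 0 < α.num := Rat.num_pos.2 h0
    have hlt : α.num < α.den := by
      have := (Rat.lt_iff α 1).1 h1
      simpa using this
    obtain ⟨a, ha⟩ := Int.eq_ofNat_of_zero_le hn.le
    have := DSC.main_frac a α.den (by omega) (by omega)
    have e : (a : ℚ) / α.den = α := by
      conv_rhs => rw [← Rat.num_div_den α, ha]
      simp
    rwa [e] at this
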